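/- Under Assumption 1, let I = {x : x̲ ≤ x ≤ x̄} ⊆ X be a closed box and suppose the disturbance set satisfies D ⊆ ∪_{i=1}^{n_D} D_i with D_i = {d : d̲^i ≤ d ≤ d̄^i} and d̲^i ≥ 0. For each link l define ξ̲^l, ξ̄^l ∈ I by ξ̲^l_k = x̲_k if k ∈ L^down_l ∪ L^up_l, ξ̲^l_k = x̄_k if k ∈ L^adj_l (and, say, ξ̲^l_k = x̲_k for all other k, on which F_l does not depend), and symmetrically ξ̄^l_k = x̄_k if k ∈ L^down_l ∪ L^up_l, ξ̄^l_k = x̲_k if k ∈ L^adj_l. Then for every signal input s, the one-step reachable set Post(I, s) = {F(x, s, d) : x ∈ I, d ∈ D} satisfies Post(I, s) ⊆ ∪_{i=1}^{n_D} { x' : F_l(ξ̲^l, s, d̲^i) ≤ x'_l ≤ F_l(ξ̄^l, s, d̄^i) for all l ∈ L }. -/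

import Mathlib

open Finset
open scoped Classical

/-- Outflow `f^out_l(x, s)` of link `l` under signal `s`. -/
noncomputable def fout {L : Type*} [Fintype L]
    (c xcap : L → ℝ) (β α : L → L → ℝ) (s : Finset L)
    (x : L → ℝ) (l : L) : ℝ :=
  if l ∈ s then
    (Finset.univ.filter fun k => 0 < β l k).fold min (min (x l) (c l))
      fun k => α l k / β l k * (xcap k - x k)
  else 0

/-- Queue update `F_l(x, s, d)`, with `L^up_l = {j : η j = τ l}`. -/
noncomputable def Fupd {L V : Type*} [Fintype L]
    (η : L → V) (τ : L → Option V)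
    (c xcap : L → ℝ) (β α : L → L → ℝ) (s : Finset L)
    (x d : L → ℝ) (l : L) : ℝ :=
  min (xcap l)
    (x l - fout c xcap β α s x l
      + ∑ j ∈ Finset.univ.filter (fun j => τ l = some (η j)), β j l * fout c xcap β α s x j
      + d l)

/-! Increasing `x` along the order that is reversed on `L^adj_l` can lower the inflow into `l` only
by using up the supply of `l`. By Assumption 1 that supply is not binding while `x l ≤ c l`, so an
upstream link `j` sends at most `α j l` times the growth of `max (x l) (c l)` less into `l`; the
supply ratios sum to at most one, so the total loss is at most that growth. What `l` retains is
`x l - f^out_l = (max (x l) (c l) - c l) + (min (x l) (c l) - f^out_l)`, and the demand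
`min (x l) (c l) - f^out_l` blocked downstream only increases, so the retained queue makes up for
the loss. -/

section Outflow

variable {L : Type*} [Fintype L] {c xcap : L → ℝ} {β α : L → L → ℝ} {s : Finset L}
  {x y : L → ℝ} {j k l : L}

theorem fout_of_notMem (hl : l ∉ s) : fout c xcap β α s x l = 0 :=
  if_neg hl

theorem le_fout_iff (hl : l ∈ s) {r : ℝ} :
    r ≤ fout c xcap β α s x l ↔
      r ≤ x l ∧ r ≤ c l ∧ ∀ k, 0 < β l k → r ≤ α l k / β l k * (xcap k - x k) := by
  simp [fout, hl, Finset.le_fold_min, and_assoc]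

theorem fout_le_queue (hl : l ∈ s) : fout c xcap β α s x l ≤ x l :=
  ((le_fout_iff hl).1 le_rfl).1

theorem fout_le_saturation (hl : l ∈ s) : fout c xcap β α s x l ≤ c l :=
  ((le_fout_iff hl).1 le_rfl).2.1

theorem fout_le_supply (hl : l ∈ s) (hβ : 0 < β l k) :
    fout c xcap β α s x l ≤ α l k / β l k * (xcap k - x k) :=
  ((le_fout_iff hl).1 le_rfl).2.2 k hβ

theorem fout_le_supply_max (hj : j ∈ s) (hβ : 0 < β j l) (hα : 0 < α j l)
    (hA1 : c l ≤ xcap l - β j l / α j l * c j) :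
    fout c xcap β α s x j ≤ α j l / β j l * (xcap l - max (x l) (c l)) := by
  rcases max_choice (x l) (c l) with hmax | hmax <;> rw [hmax]
  · exact fout_le_supply hj hβ
  · calc fout c xcap β α s x j ≤ c j := fout_le_saturation hj
      _ = α j l / β j l * (β j l / α j l * c j) := by field_simp
      _ ≤ α j l / β j l * (xcap l - c l) := by gcongr; linarith

theorem min_sub_fout_le_min_sub_fout (hα : ∀ k, 0 ≤ α l k) (hxy : x l ≤ y l)
    (hdown : ∀ k, 0 < β l k → x k ≤ y k) :
    min (x l) (c l) - fout c xcap β α s x l ≤ min (y l) (c l) - fout c xcap β α s y l := by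
  have hdemand : min (x l) (c l) ≤ min (y l) (c l) := min_le_min_right _ hxy
  by_cases hl : l ∈ s
  · have hserved : fout c xcap β α s y l ≤ min (y l) (c l) :=
      le_min (fout_le_queue hl) (fout_le_saturation hl)
    suffices fout c xcap β α s y l - (min (y l) (c l) - min (x l) (c l)) ≤
        fout c xcap β α s x l by linarith
    refine (le_fout_iff hl).2 ⟨?_, ?_, fun k hk => ?_⟩
    · linarith [min_le_left (x l) (c l)]
    · linarith [min_le_right (x l) (c l)]
    · calc fout c xcap β α s y l - (min (y l) (c l) - min (x l) (c l))
          ≤ fout c xcap β α s y l := by linarith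
        _ ≤ α l k / β l k * (xcap k - y k) := fout_le_supply hl hk
        _ ≤ α l k / β l k * (xcap k - x k) := by
          have := div_nonneg (hα k) hk.le
          gcongr
          exact hdown k hk
  · simpa only [fout_of_notMem hl, sub_zero] using hdemand

theorem fout_le_fout_add (hj : j ∈ s) (hβ : 0 < β j l) (hα : ∀ k, 0 < α j k)
    (hA1 : c l ≤ xcap l - β j l / α j l * c j) (hxyl : x l ≤ y l) (hxyj : x j ≤ y j)
    (hadj : ∀ k, k ≠ l → 0 < β j k → y k ≤ x k) :
    fout c xcap β α s x j ≤
      fout c xcap β α s y j + α j l / β j l * (max (y l) (c l) - max (x l) (c l)) := by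
  set δ := max (y l) (c l) - max (x l) (c l) with hδ
  have hloss : 0 ≤ α j l / β j l * δ :=
    mul_nonneg (div_pos (hα l) hβ).le (sub_nonneg.2 (max_le_max_right _ hxyl))
  rw [← sub_le_iff_le_add]
  refine (le_fout_iff hj).2 ⟨?_, ?_, fun k hk => ?_⟩
  · linarith [fout_le_queue (c := c) (xcap := xcap) (β := β) (α := α) (x := x) hj]
  · linarith [fout_le_saturation (c := c) (xcap := xcap) (β := β) (α := α) (x := x) hj]
  · have hratio : 0 ≤ α j k / β j k := (div_pos (hα k) hk).le
    rcases eq_or_ne k l with rfl | hkl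
    · calc fout c xcap β α s x j - α j k / β j k * δ
          ≤ α j k / β j k * (xcap k - max (x k) (c k)) - α j k / β j k * δ := by
            gcongr
            exact fout_le_supply_max hj hβ (hα k) hA1
        _ = α j k / β j k * (xcap k - max (y k) (c k)) := by rw [hδ]; ring
        _ ≤ α j k / β j k * (xcap k - y k) := by
            gcongr
            exact le_max_left _ _
    · calc fout c xcap β α s x j - α j l / β j l * δ
          ≤ fout c xcap β α s x j := by linarith
        _ ≤ α j k / β j k * (xcap k - x k) := fout_le_supply hj hk
        _ ≤ α j k / β j k * (xcap k - y k) := by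
            gcongr
            exact hadj k hkl hk

theorem mul_fout_le_mul_fout_add (hβ : 0 ≤ β j l) (hα : ∀ k, 0 < α j k)
    (hA1 : j ∈ s → 0 < β j l → c l ≤ xcap l - β j l / α j l * c j)
    (hxyl : x l ≤ y l) (hxyj : x j ≤ y j) (hadj : ∀ k, k ≠ l → 0 < β j k → y k ≤ x k) :
    β j l * fout c xcap β α s x j ≤ β j l * fout c xcap β α s y j +
      if j ∈ s then α j l * (max (y l) (c l) - max (x l) (c l)) else 0 := by
  by_cases hj : j ∈ s
  · rw [if_pos hj]
    rcases hβ.eq_or_lt with hzero | hpos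
    · have hgrowth : 0 ≤ α j l * (max (y l) (c l) - max (x l) (c l)) :=
        mul_nonneg (hα l).le (sub_nonneg.2 (max_le_max_right _ hxyl))
      simpa only [← hzero, zero_mul, zero_add] using hgrowth
    · calc β j l * fout c xcap β α s x j
          ≤ β j l * (fout c xcap β α s y j +
              α j l / β j l * (max (y l) (c l) - max (x l) (c l))) := by
            gcongr
            exact fout_le_fout_add hj hpos hα (hA1 hj hpos) hxyl hxyj hadj
        _ = β j l * fout c xcap β α s y j +
              α j l * (max (y l) (c l) - max (x l) (c l)) := by field_simp
  · simp only [fout_of_notMem hj, if_neg hj, add_zero, le_refl]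

end Outflow

section MixedMonotonicity

variable {L V : Type*} {η : L → V} {τ : L → Option V} {a b x y : L → ℝ} {j k l : L}

/-- The order on states for which `F_l` is monotone: componentwise, but reversed on
`L^adj_l = {k ≠ l : τ k = τ l}`. -/
structure AdjFlipLE (τ : L → Option V) (l : L) (x y : L → ℝ) : Prop where
  le_of_adj : ∀ k, k ≠ l ∧ τ k = τ l → y k ≤ x k
  le_of_not_adj : ∀ k, ¬(k ≠ l ∧ τ k = τ l) → x k ≤ y k

/-- The state equal to `b` on `L^adj_l` and to `a` elsewhere. The corners of the box `[a, b]`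
written `ξ̲ˡ` and `ξ̄ˡ` in the paper are `adjCorner τ l a b` and `adjCorner τ l b a`. -/
noncomputable def adjCorner (τ : L → Option V) (l : L) (a b : L → ℝ) : L → ℝ :=
  fun k => if k ≠ l ∧ τ k = τ l then b k else a k

theorem adjCorner_adjFlipLE (hx : x ∈ Set.Icc a b) : AdjFlipLE τ l (adjCorner τ l a b) x where
  le_of_adj k hk := (hx.2 k).trans_eq (if_pos hk).symm
  le_of_not_adj k hk := (if_neg hk).trans_le (hx.1 k)

theorem adjFlipLE_adjCorner (hx : x ∈ Set.Icc a b) : AdjFlipLE τ l x (adjCorner τ l b a) where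
  le_of_adj k hk := (if_pos hk).trans_le (hx.1 k)
  le_of_not_adj k hk := (hx.2 k).trans_eq (if_neg hk).symm

namespace AdjFlipLE

theorem le_self (h : AdjFlipLE τ l x y) : x l ≤ y l :=
  h.le_of_not_adj l fun hl => hl.1 rfl

theorem le_downstream (h : AdjFlipLE τ l x y) (hself : some (η l) ≠ τ l)
    (hk : τ k = some (η l)) : x k ≤ y k :=
  h.le_of_not_adj k fun hadj => hself (hk.symm.trans hadj.2)

theorem le_upstream (h : AdjFlipLE τ l x y) (hself : some (η j) ≠ τ j)
    (hj : τ l = some (η j)) : x j ≤ y j :=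
  h.le_of_not_adj j fun hadj => hself (hj.symm.trans hadj.2.symm)

end AdjFlipLE

variable [Fintype L] {c xcap : L → ℝ} {β α : L → L → ℝ} {s : Finset L} {d e : L → ℝ}

theorem inflow_le_inflow_add (hself : ∀ l, some (η l) ≠ τ l) (hβ : ∀ l k, 0 ≤ β l k)
    (hβsupp : ∀ l k, 0 < β l k → τ k = some (η l)) (hα : ∀ l k, 0 < α l k)
    (hαsum : ∑ j ∈ Finset.univ.filter (fun j => j ∈ s ∧ some (η j) = τ l), α j l ≤ 1)
    (hA1 : ∀ j ∈ s, 0 < β j l → c l ≤ xcap l - β j l / α j l * c j)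
    (hxy : AdjFlipLE τ l x y) :
    ∑ j ∈ Finset.univ.filter (fun j => τ l = some (η j)), β j l * fout c xcap β α s x j ≤
      ∑ j ∈ Finset.univ.filter (fun j => τ l = some (η j)), β j l * fout c xcap β α s y j +
        (max (y l) (c l) - max (x l) (c l)) := by
  set δ := max (y l) (c l) - max (x l) (c l)
  have hδ : 0 ≤ δ := sub_nonneg.2 (max_le_max_right _ hxy.le_self)
  have hloss : ∑ j ∈ Finset.univ.filter (fun j => τ l = some (η j)),
      (if j ∈ s then α j l * δ else 0) ≤ δ := by
    rw [← Finset.sum_filter, Finset.filter_filter, ← Finset.sum_mul]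
    simp only [and_comm, eq_comm] at hαsum ⊢
    exact mul_le_of_le_one_left hδ hαsum
  refine (Finset.sum_le_sum fun j hj => ?_).trans
    (Finset.sum_add_distrib.trans_le (add_le_add_right hloss _))
  have hjl : τ l = some (η j) := (Finset.mem_filter.1 hj).2
  exact mul_fout_le_mul_fout_add (hβ j l) (hα j) (hA1 j) hxy.le_self
    (hxy.le_upstream (hself j) hjl)
    fun k hkl hk => hxy.le_of_adj k ⟨hkl, (hβsupp j k hk).trans hjl.symm⟩

theorem Fupd_le_Fupd_of_adjFlipLE (hself : ∀ l, some (η l) ≠ τ l) (hβ : ∀ l k, 0 ≤ β l k)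
    (hβsupp : ∀ l k, 0 < β l k → τ k = some (η l)) (hα : ∀ l k, 0 < α l k)
    (hαsum : ∑ j ∈ Finset.univ.filter (fun j => j ∈ s ∧ some (η j) = τ l), α j l ≤ 1)
    (hA1 : ∀ j ∈ s, 0 < β j l → c l ≤ xcap l - β j l / α j l * c j)
    (hxy : AdjFlipLE τ l x y) (hde : d l ≤ e l) :
    Fupd η τ c xcap β α s x d l ≤ Fupd η τ c xcap β α s y e l := by
  have hblocked := min_sub_fout_le_min_sub_fout (c := c) (xcap := xcap) (s := s)
    (fun k => (hα l k).le) hxy.le_self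
    fun k hk => hxy.le_downstream (hself l) (hβsupp l k hk)
  have hinflow := inflow_le_inflow_add hself hβ hβsupp hα hαsum hA1 hxy
  refine min_le_min_left _ ?_
  linarith [max_add_min (x l) (c l), max_add_min (y l) (c l)]

theorem traffic_post_subset_postBar_general {ι : Type*} (hself : ∀ l, some (η l) ≠ τ l)
    (hβ : ∀ l k, 0 ≤ β l k) (hβsupp : ∀ l k, 0 < β l k → τ k = some (η l))
    (hα : ∀ l k, 0 < α l k)
    (hαsum : ∀ k, ∑ j ∈ Finset.univ.filter (fun j => j ∈ s ∧ some (η j) = τ k), α j k ≤ 1)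
    (hA1 : ∀ l, ∀ j ∈ s, 0 < β j l → c l ≤ xcap l - β j l / α j l * c j)
    {dlo dhi : ι → L → ℝ} {D : Set (L → ℝ)} (hD : D ⊆ ⋃ i, Set.Icc (dlo i) (dhi i))
    (hx : x ∈ Set.Icc a b) (hd : d ∈ D) :
    Fupd η τ c xcap β α s x d ∈ ⋃ i, {x' : L → ℝ | ∀ l,
      Fupd η τ c xcap β α s (adjCorner τ l a b) (dlo i) l ≤ x' l ∧
      x' l ≤ Fupd η τ c xcap β α s (adjCorner τ l b a) (dhi i) l} := by
  obtain ⟨i, hdi⟩ := Set.mem_iUnion.1 (hD hd)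
  refine Set.mem_iUnion.2 ⟨i, fun l => ⟨?_, ?_⟩⟩
  · exact Fupd_le_Fupd_of_adjFlipLE hself hβ hβsupp hα (hαsum l) (hA1 l)
      (adjCorner_adjFlipLE hx) (hdi.1 l)
  · exact Fupd_le_Fupd_of_adjFlipLE hself hβ hβsupp hα (hαsum l) (hA1 l)
      (adjFlipLE_adjCorner hx) (hdi.2 l)

end MixedMonotonicity

/-- **Corollary 1.** Under Assumption 1, the one-step reachable set from
a closed box `I = {x : a ≤ x ≤ b} ⊆ X` under signal `s` and disturbances
`D ⊆ ⋃ i, [d̲ⁱ, d̄ⁱ]` is contained in the union over `i` of the boxes whose `l`-th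
coordinate is bounded below by `F_l(ξ̲ˡ, s, d̲ⁱ)` and above by `F_l(ξ̄ˡ, s, d̄ⁱ)`,
where `ξ̲ˡ, ξ̄ˡ` are the corners of `I` flipped on the adjacent links
`L^adj_l = {k ≠ l : τ k = τ l}`. -/
theorem traffic_post_subset_postBar {L V : Type*} [Fintype L]
    (η : L → V) (τ : L → Option V) (hself : ∀ l, some (η l) ≠ τ l)
    (c xcap : L → ℝ) (hc : ∀ l, 0 < c l) (hcap : ∀ l, 0 < xcap l)
    (β : L → L → ℝ) (hβ : ∀ l k, 0 ≤ β l k)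
    (hβsupp : ∀ l k, 0 < β l k → τ k = some (η l))
    (hβsum : ∀ l, ∑ k ∈ Finset.univ.filter (fun k => τ k = some (η l)), β l k ≤ 1)
    (s : Finset L) (α : L → L → ℝ) (hα : ∀ l k, 0 < α l k)
    (hαsum : ∀ k, (Finset.univ.filter fun j => j ∈ s ∧ some (η j) = τ k).Nonempty →
      ∑ j ∈ Finset.univ.filter (fun j => j ∈ s ∧ some (η j) = τ k), α j k = 1)
    (hA1 : ∀ l k, τ l = some (η k) → 0 < β k l → c l ≤ xcap l - β k l / α k l * c k)
    (a b : L → ℝ) (ha : ∀ l, 0 ≤ a l) (hab : ∀ l, a l ≤ b l) (hb : ∀ l, b l ≤ xcap l)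
    (nD : ℕ) (dlo dhi : Fin nD → L → ℝ) (hdlo : ∀ i l, 0 ≤ dlo i l)
    (D : Set (L → ℝ)) (hD : D ⊆ ⋃ i : Fin nD, Set.Icc (dlo i) (dhi i)) :
    ∀ x d : L → ℝ, (∀ l, a l ≤ x l) → (∀ l, x l ≤ b l) → d ∈ D →
      Fupd η τ c xcap β α s x d ∈
        ⋃ i : Fin nD, {x' : L → ℝ | ∀ l,
          Fupd η τ c xcap β α s
              (fun k => if k ≠ l ∧ τ k = τ l then b k else a k) (dlo i) l ≤ x' l ∧
          x' l ≤ Fupd η τ c xcap β α s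
              (fun k => if k ≠ l ∧ τ k = τ l then a k else b k) (dhi i) l} := by
  intro x d hax hxb hd
  exact traffic_post_subset_postBar_general hself hβ hβsupp hα
    (fun k => (Finset.eq_empty_or_nonempty _).elim (fun h => by simp [h]) fun h => (hαsum k h).le)
    (fun l j _ hj => hA1 l j (hβsupp j l hj) hj) hD ⟨hax, hxb⟩ hd
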